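/- Let p be a prime number with p ≡ 3, 13, or 11 (mod 16) (that is, p ≡ ±3 or −5 (mod 16)). If the polynomial x⁴ + 4p ∈ ℚ[x] is irreducible over ℚ, then it is 2-superirreducible over ℚ; and if the polynomial x⁴ − p ∈ ℚ[x] is irreducible over ℚ, then it is 2-superirreducible over ℚ. -/

import Mathlib

open Polynomial

/-- A polynomial `f ∈ R[x]` is `k`-superirreducible over `R` if it is irreducible and
`f(g(x))` is irreducible for every nonconstant `g ∈ R[x]` of degree at most `k`. -/
def IsSuperirreducible (R : Type*) [CommRing R] [IsDomain R] (k : ℕ) (f : Polynomial R) : Prop :=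
  Irreducible f ∧ ∀ g : Polynomial R, 0 < g.natDegree → g.natDegree ≤ k →
    Irreducible (f.comp g)

/-!
Completing the square turns `f ∘ g`, for `g` quadratic, into `h(X ^ 2)` with `h = f(a * X + v)`. If
`h(X ^ 2)` is reducible, then a root of `h` is a square in the field it generates, and for `h` of
even degree its norm shows that `h.leadingCoeff * h(0)`, hence `f.leadingCoeff * f(v)`, is a square.
It remains to see that `v ^ 4 - p` and `v ^ 4 + 4 * p` are never squares in `ℚ`. This is Fermat's
descent: up to congruence obstructions modulo `16`, a primitive solution of
`z ^ 2 = x ^ 4 - p * y ^ 4` has `y` even and yields one of `x ^ 2 = a ^ 4 + 4 * p * b ^ 4` with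
`2 * b ∣ y`, and a primitive solution of `z ^ 2 = x ^ 4 + 4 * p * y ^ 4` yields one of
`x ^ 2 = a ^ 4 - p * b ^ 4` with `b ∣ y`.
-/

section Field

variable {F : Type*} [Field F]

lemma irreducible_comp_C_mul_X_add_C_iff {f : F[X]} {a : F} (ha : a ≠ 0) (b : F) :
    Irreducible (f.comp (C a * X + C b)) ↔ Irreducible f := by
  let := invertibleOfNonzero ha
  rw [comp_eq_aeval, ← algEquivCMulXAddC_apply, MulEquiv.irreducible_iff]

lemma isSquare_coeff_zero_minpoly_of_isSquare_gen {E : Type*} [Field E] [Algebra F E] {x : E}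
    (hx : IsIntegral F x) (heven : Even (minpoly F x).natDegree)
    (hsq : IsSquare (IntermediateField.AdjoinSimple.gen F x)) :
    IsSquare ((minpoly F x).coeff 0) := by
  have hnorm := Algebra.PowerBasis.norm_gen_eq_coeff_zero_minpoly
    (IntermediateField.adjoin.powerBasis hx)
  rw [IntermediateField.adjoin.powerBasis_gen, IntermediateField.adjoin.powerBasis_dim,
    IntermediateField.minpoly_gen, heven.neg_one_pow, one_mul] at hnorm
  exact hnorm ▸ hsq.map (Algebra.norm F)

lemma irreducible_comp_X_sq_of_monic {f : F[X]} (hmonic : f.Monic) (hirr : Irreducible f)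
    (heven : Even f.natDegree) (hsq : ¬IsSquare (f.coeff 0)) : Irreducible (f.comp (X ^ 2)) := by
  refine Polynomial.irreducible_comp hmonic (monic_X_pow 2) hirr fun E _ _ x hx ↦ ?_
  have hint : IsIntegral F x := minpoly.ne_zero_iff.1 (hx ▸ hmonic.ne_zero)
  rw [Polynomial.map_pow, map_X, X_pow_sub_C_irreducible_iff_of_prime Nat.prime_two]
  intro y hy
  refine hsq (hx ▸ isSquare_coeff_zero_minpoly_of_isSquare_gen hint (hx ▸ heven) ?_)
  exact ⟨y, by rw [← hy, sq]⟩

lemma irreducible_comp_X_sq {f : F[X]} (hirr : Irreducible f) (heven : Even f.natDegree)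
    (hsq : ¬IsSquare (f.leadingCoeff * f.coeff 0)) : Irreducible (f.comp (X ^ 2)) := by
  have hlc : f.leadingCoeff ≠ 0 := leadingCoeff_ne_zero.2 hirr.ne_zero
  have hunit : IsUnit (C f.leadingCoeff⁻¹) := isUnit_C.2 (inv_ne_zero hlc).isUnit
  have hsq' : ¬IsSquare ((f * C f.leadingCoeff⁻¹).coeff 0) := by
    rw [coeff_mul_C]
    intro h
    have heq : f.leadingCoeff * f.coeff 0 =
        f.leadingCoeff ^ 2 * (f.coeff 0 * f.leadingCoeff⁻¹) := by field_simp
    exact hsq (heq ▸ (IsSquare.sq _).mul h)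
  have hmonic := irreducible_comp_X_sq_of_monic (monic_mul_leadingCoeff_inv hirr.ne_zero)
    (irreducible_mul_leadingCoeff_inv.2 hirr)
    (by rwa [natDegree_mul_leadingCoeff_inv _ hirr.ne_zero]) hsq'
  rwa [mul_comp, C_comp, irreducible_mul_isUnit hunit] at hmonic

lemma exists_eq_comp_X_sq_comp_of_natDegree_eq_two [NeZero (2 : F)] {g : F[X]}
    (hg : g.natDegree = 2) :
    ∃ a v h : F, a ≠ 0 ∧ g = ((C a * X + C v).comp (X ^ 2)).comp (X + C h) := by
  have ha : g.coeff 2 ≠ 0 := by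
    rw [← hg, coeff_natDegree, leadingCoeff_ne_zero]
    exact ne_zero_of_natDegree_gt (hg ▸ one_lt_two)
  have hquad := eq_quadratic_of_degree_le_two (natDegree_le_iff_degree_le.1 hg.le)
  set a := g.coeff 2
  set b := g.coeff 1
  set c := g.coeff 0
  obtain ⟨h, hb⟩ : ∃ h, b = 2 * a * h := ⟨b / (2 * a), by field_simp⟩
  refine ⟨a, c - a * h ^ 2, h, ha, hquad.trans ?_⟩
  simp only [hb, add_comp, sub_comp, mul_comp, pow_comp, C_comp, X_comp, C_mul, C_sub, C_pow,
    C_ofNat]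
  ring

theorem isSuperirreducible_two_of_not_isSquare_eval [NeZero (2 : F)] {f : F[X]}
    (hirr : Irreducible f) (heven : Even f.natDegree)
    (hsq : ∀ v, ¬IsSquare (f.leadingCoeff * f.eval v)) : IsSuperirreducible F 2 f := by
  refine ⟨hirr, fun g hpos hle ↦ ?_⟩
  obtain hg | hg : g.natDegree = 1 ∨ g.natDegree = 2 := by lia
  · obtain ⟨a, ha, b, rfl⟩ := natDegree_eq_one.1 hg
    exact (irreducible_comp_C_mul_X_add_C_iff ha b).2 hirr
  obtain ⟨a, v, h, ha, rfl⟩ := exists_eq_comp_X_sq_comp_of_natDegree_eq_two hg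
  have hdeg : (C a * X + C v).natDegree = 1 := natDegree_linear ha
  have hlc : (f.comp (C a * X + C v)).leadingCoeff = f.leadingCoeff * a ^ f.natDegree := by
    rw [leadingCoeff_comp (by rw [hdeg]; exact one_ne_zero), leadingCoeff_linear ha]
  have hcoeff : (f.comp (C a * X + C v)).coeff 0 = f.eval v := by
    simp [coeff_zero_eq_eval_zero]
  have hcomp : Irreducible ((f.comp (C a * X + C v)).comp (X ^ 2)) := by
    refine irreducible_comp_X_sq ((irreducible_comp_C_mul_X_add_C_iff ha v).2 hirr)
      (by rwa [natDegree_comp, hdeg, mul_one]) fun hsq' ↦ hsq v ?_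
    have heq : f.leadingCoeff * f.eval v =
        f.leadingCoeff * a ^ f.natDegree * f.eval v / a ^ f.natDegree := by field_simp
    rw [hlc, hcoeff] at hsq'
    exact heq ▸ hsq'.div (heven.isSquare_pow a)
  rw [← comp_assoc, ← comp_assoc]
  simpa using (irreducible_comp_C_mul_X_add_C_iff one_ne_zero h).2 hcomp

end Field

lemma isSquare_num_pow_add_mul_den_pow {n : ℕ} (hn : Even n) {c : ℤ} {v : ℚ}
    (h : IsSquare (v ^ n + c)) : IsSquare (v.num ^ n + c * v.den ^ n) := by
  have hscale : (v ^ n + c) * (v.den : ℚ) ^ n = ((v.num ^ n + c * v.den ^ n : ℤ) : ℚ) := by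
    push_cast
    rw [add_mul, ← mul_pow, Rat.mul_den_eq_num]
  exact Rat.isSquare_intCast_iff.1 (hscale ▸ h.mul (hn.isSquare_pow _))

lemma isCoprime_of_mul_eq_prime_mul {R : Type*} [CommRing R] [IsDomain R] [IsPrincipalIdealRing R]
    {q s t y : R} (hq : Prime q) (hst : s * t = q * y) (hy : IsCoprime (s + t) y) :
    IsCoprime s t := by
  have hadd : ¬q ∣ s + t := by
    intro hdvd
    obtain ⟨hs, ht⟩ : q ∣ s ∧ q ∣ t := by
      rcases hq.dvd_or_dvd ⟨y, hst⟩ with h | h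
      · exact ⟨h, (dvd_add_right h).1 hdvd⟩
      · exact ⟨(dvd_add_left h).1 hdvd, h⟩
    have hqy : q ∣ y := (mul_dvd_mul_iff_left hq.ne_zero).1 (hst ▸ mul_dvd_mul hs ht)
    exact hq.not_isUnit (hy.isUnit_of_dvd' hdvd hqy)
  have hmul : IsCoprime (s + t) (s * t) :=
    hst ▸ (hq.coprime_iff_not_dvd.2 hadd).symm.mul_right hy
  exact (IsCoprime.of_add_mul_left_left (z := 1)
    (by rw [mul_one, add_comm]; exact hmul.of_mul_right_left)).symm

lemma exists_eq_pow_of_isCoprime_of_mul_eq_pow {x y e : ℤ} {n : ℕ} (hx : 0 ≤ x)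
    (hxy : IsCoprime x y) (h : x * y = e ^ n) : ∃ a, x = a ^ n := by
  obtain ⟨d, hd⟩ := exists_associated_pow_of_mul_eq_pow' hxy h
  exact ⟨d.natAbs, Int.eq_of_associated_of_nonneg
    (hd.symm.trans (Int.associated_natAbs d).pow_pow) hx (by positivity)⟩

lemma exists_pow_and_prime_mul_pow {p : ℕ} (hp : p.Prime) {x y e : ℤ} {n : ℕ} (hn : n ≠ 0)
    (hx : 0 ≤ x) (hy : 0 ≤ y) (hxy : IsCoprime x y) (h : x * y = p * e ^ n) :
    ∃ a b : ℤ, IsCoprime a b ∧ b ∣ e ∧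
      (x = a ^ n ∧ y = p * b ^ n ∨ x = p * b ^ n ∧ y = a ^ n) := by
  have hp0 : (0 : ℤ) < p := mod_cast hp.pos
  wlog hpy : (p : ℤ) ∣ y generalizing x y
  · have hpx := ((Nat.prime_iff_prime_int.1 hp).dvd_or_dvd ⟨_, h⟩).resolve_right hpy
    obtain ⟨a, b, hab, hbe, hor⟩ := this hy hx hxy.symm (by rw [mul_comm, h]) hpx
    exact ⟨a, b, hab, hbe, hor.symm.imp And.symm And.symm⟩
  obtain ⟨z, rfl⟩ := hpy
  have hxz : IsCoprime x z := hxy.of_mul_right_right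
  have hprod : x * z = e ^ n := mul_left_cancel₀ hp0.ne' (by rw [← h]; ring)
  obtain ⟨a, rfl⟩ := exists_eq_pow_of_isCoprime_of_mul_eq_pow hx hxz hprod
  obtain ⟨b, rfl⟩ := exists_eq_pow_of_isCoprime_of_mul_eq_pow
    (nonneg_of_mul_nonneg_right hy hp0) hxz.symm (by rw [mul_comm, hprod])
  refine ⟨a, b, (IsCoprime.pow_iff hn.bot_lt hn.bot_lt).1 hxz, ?_, .inl ⟨rfl, rfl⟩⟩
  exact (Int.pow_dvd_pow_iff hn).1 ⟨a ^ n, by rw [← hprod, mul_comm]⟩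

lemma nonneg_and_nonneg_of_add_nonneg_of_mul_nonneg {R : Type*} [Ring R] [LinearOrder R]
    [IsStrictOrderedRing R] {x y : R} (hadd : 0 ≤ x + y) (hmul : 0 ≤ x * y) : 0 ≤ x ∧ 0 ≤ y := by
  obtain h | ⟨hx, hy⟩ := nonneg_and_nonneg_or_nonpos_and_nonpos_of_mul_nonneg hmul
  · exact h
  · exact ⟨hadd.trans (add_le_of_nonpos_right hy), hadd.trans (add_le_of_nonpos_left hx)⟩

lemma odd_or_odd_of_isCoprime {a b : ℤ} (h : IsCoprime a b) : Odd a ∨ Odd b := by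
  by_contra! hne
  simp only [Int.not_odd_iff_even, even_iff_two_dvd] at hne
  exact Int.prime_two.not_isUnit (h.isUnit_of_dvd' hne.1 hne.2)

lemma mul_pow_four_emod_sixteen (k t : ℤ) :
    Even t ∧ k * t ^ 4 % 16 = 0 ∨ Odd t ∧ k * t ^ 4 % 16 = k % 16 := by
  obtain ht | ht := Int.even_or_odd t
  · exact .inl ⟨ht, Int.emod_eq_zero_of_dvd ((pow_dvd_pow_of_dvd ht.two_dvd 4).mul_left k)⟩
  · have hdvd : 8 * 2 ∣ (t ^ 2 - 1) * (t ^ 2 + 1) :=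
      mul_dvd_mul (Int.eight_dvd_sq_sub_one_of_odd ht) ht.pow.add_one.two_dvd
    have hmod : t ^ 4 ≡ 1 [ZMOD 16] :=
      (Int.modEq_of_dvd (hdvd.trans (dvd_of_eq (by ring)))).symm
    exact .inr ⟨ht, by simpa [Int.ModEq] using hmod.mul_left k⟩

lemma sq_emod_sixteen (t : ℤ) :
    t ^ 2 % 16 = 0 ∨ t ^ 2 % 16 = 1 ∨ t ^ 2 % 16 = 4 ∨ t ^ 2 % 16 = 9 := by
  have hnonneg := Int.emod_nonneg t (show (16 : ℤ) ≠ 0 by decide)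
  have hlt := Int.emod_lt_of_pos t (show (0 : ℤ) < 16 by decide)
  rw [sq, Int.mul_emod]
  interval_cases t % 16 <;> simp

lemma exists_add_eq_and_sub_eq_and_mul_eq {z m k : ℤ} (h : z ^ 2 = m ^ 2 + 4 * k) :
    ∃ s t : ℤ, s + t = z ∧ s - t = m ∧ s * t = k := by
  have heven : Even (z - m) := (Int.even_pow' two_ne_zero).1
    ⟨m ^ 2 + 2 * k - z * m, by linear_combination h⟩
  obtain ⟨t, ht⟩ := heven
  refine ⟨m + t, t, by linear_combination -ht, by ring, ?_⟩
  exact mul_left_cancel₀ four_ne_zero (by linear_combination h - (z + m + 2 * t) * ht)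

lemma exists_add_four_mul_eq_sq_and_mul_eq {x z k : ℤ} (hx : Odd x)
    (h : z ^ 2 = x ^ 4 - 16 * k) : ∃ s t : ℤ, s + 4 * t = x ^ 2 ∧ s * t = k := by
  have hx4 := Int.sq_mod_four_eq_one_of_odd hx
  wlog hdvd : 4 ∣ x ^ 2 + z generalizing z
  · refine this (z := -z) (by rwa [neg_sq]) ?_
    have hz : Odd z := (Int.odd_pow' two_ne_zero).1 <| by
      rw [h]
      exact hx.pow.sub_even ⟨8 * k, by ring⟩
    grind
  obtain ⟨u, hu⟩ := hdvd
  obtain rfl : z = 4 * u - x ^ 2 := by linarith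
  have hmul : (x ^ 2 - 2 * u) * u = 2 * k :=
    mul_left_cancel₀ (show (8 : ℤ) ≠ 0 by decide) (by linear_combination -h)
  have hodd : Odd (x ^ 2 - 2 * u) := hx.pow.sub_even (even_two_mul u)
  obtain ⟨t, rfl⟩ : 2 ∣ u :=
    (Int.isCoprime_two_left.2 hodd).dvd_of_dvd_mul_left ⟨k, hmul⟩
  exact ⟨x ^ 2 - 4 * t, t, by ring, by linarith⟩

section Descent

variable {p : ℕ}

lemma pow_four_add_sq_ne_mul_pow_four (hmod : p % 16 = 3 ∨ p % 16 = 13 ∨ p % 16 = 11)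
    {a b c : ℤ} (hab : IsCoprime a b) : a ^ 4 + c ^ 2 ≠ p * b ^ 4 := by
  intro h
  have hpar := odd_or_odd_of_isCoprime hab
  have ha4 := mul_pow_four_emod_sixteen 1 a
  have hb4 := mul_pow_four_emod_sixteen p b
  have hc2 := sq_emod_sixteen c
  -- Modulo `16`: if `b` is even, then `a` is odd and `1 + c ^ 2 ≡ 0`; if `b` is odd, then
  -- `p ≡ a ^ 4 + c ^ 2` is one of `0, 1, 2, 4, 5, 9, 10`.
  grind

lemma pow_four_add_mul_pow_four_ne_two_mul_sq
    (hmod : p % 16 = 3 ∨ p % 16 = 13 ∨ p % 16 = 11) {a b c : ℤ} (hab : IsCoprime a b) :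
    a ^ 4 + p * b ^ 4 ≠ 2 * c ^ 2 := by
  intro h
  have hpar := odd_or_odd_of_isCoprime hab
  have ha4 := mul_pow_four_emod_sixteen 1 a
  have hb4 := mul_pow_four_emod_sixteen p b
  have hc2 := sq_emod_sixteen c
  -- Parity forces `a` and `b` to be odd, and then `p ≡ 2 * c ^ 2 - 1` modulo
  -- `16` is one of `1, 7, 15`.
  grind

lemma sq_ne_pow_four_sub_mul_pow_four_of_odd (hp : p.Prime)
    (hmod : p % 16 = 3 ∨ p % 16 = 13 ∨ p % 16 = 11) {x y z : ℤ} (hy : Odd y)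
    (hxy : IsCoprime x y) : z ^ 2 ≠ x ^ 4 - p * y ^ 4 := by
  intro h
  have hmul : (x ^ 2 - z) * (x ^ 2 + z) = p * y ^ 4 := by linear_combination -h
  have hadd : (x ^ 2 - z) + (x ^ 2 + z) = 2 * x ^ 2 := by ring
  obtain ⟨hs, ht⟩ : 0 ≤ x ^ 2 - z ∧ 0 ≤ x ^ 2 + z :=
    nonneg_and_nonneg_of_add_nonneg_of_mul_nonneg (by rw [hadd]; positivity)
      (by rw [hmul]; positivity)
  have hcop : IsCoprime (2 * x ^ 2) (y ^ 4) :=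
    (Int.isCoprime_two_left.2 hy.pow).mul_left hxy.pow
  have hst := isCoprime_of_mul_eq_prime_mul (Nat.prime_iff_prime_int.1 hp) hmul (hadd ▸ hcop)
  obtain ⟨a, b, hab, -, ⟨hs, ht⟩ | ⟨hs, ht⟩⟩ :=
    exists_pow_and_prime_mul_pow hp four_ne_zero hs ht hst hmul
  all_goals exact pow_four_add_mul_pow_four_ne_two_mul_sq hmod hab (c := x) (by linarith)

lemma exists_sq_eq_pow_four_sub_mul_pow_four (hp : p.Prime)
    (hmod : p % 16 = 3 ∨ p % 16 = 13 ∨ p % 16 = 11) {x y z : ℤ}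
    (hxy : IsCoprime x y) (h : z ^ 2 = x ^ 4 + 4 * p * y ^ 4) :
    ∃ a b : ℤ, IsCoprime a b ∧ b ∣ y ∧ x ^ 2 = a ^ 4 - p * b ^ 4 := by
  wlog hz : 0 ≤ z generalizing z
  · exact this (z := -z) (by rwa [neg_sq]) (by lia)
  obtain ⟨s, t, rfl, hsub, hmul⟩ := exists_add_eq_and_sub_eq_and_mul_eq
    (show z ^ 2 = (x ^ 2) ^ 2 + 4 * (p * y ^ 4) by linear_combination h)
  obtain ⟨hs, ht⟩ : 0 ≤ s ∧ 0 ≤ t :=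
    nonneg_and_nonneg_of_add_nonneg_of_mul_nonneg hz (by rw [hmul]; positivity)
  have hcop : IsCoprime s (-t) := isCoprime_of_mul_eq_prime_mul (y := -(y ^ 4))
    (Nat.prime_iff_prime_int.1 hp) (by linear_combination -hmul)
    (by rw [← sub_eq_add_neg, hsub]; exact hxy.pow.neg_right)
  obtain ⟨a, b, hab, hby, ⟨rfl, rfl⟩ | ⟨rfl, rfl⟩⟩ := exists_pow_and_prime_mul_pow hp four_ne_zero
    hs ht ((IsCoprime.neg_right_iff s t).1 hcop) hmul
  · exact ⟨a, b, hab, hby, hsub.symm⟩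
  · exact absurd (by linear_combination -hsub) (pow_four_add_sq_ne_mul_pow_four hmod hab (c := x))

lemma exists_sq_eq_pow_four_add_four_mul_pow_four (hp : p.Prime)
    (hmod : p % 16 = 3 ∨ p % 16 = 13 ∨ p % 16 = 11) {x y z : ℤ}
    (hxy : IsCoprime x (2 * y)) (h : z ^ 2 = x ^ 4 - p * (2 * y) ^ 4) :
    ∃ a b : ℤ, IsCoprime a b ∧ b ∣ y ∧ x ^ 2 = a ^ 4 + 4 * p * b ^ 4 := by
  have hx2 : IsCoprime x 2 := hxy.of_mul_right_left
  have hx : Odd x := Int.isCoprime_two_right.1 hx2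
  obtain ⟨s, t, hadd, hst⟩ := exists_add_four_mul_eq_sq_and_mul_eq hx
    (show z ^ 2 = x ^ 4 - 16 * (p * y ^ 4) by linear_combination h)
  have hmul : s * (4 * t) = p * (2 ^ 2 * y ^ 4) := by linear_combination 4 * hst
  obtain ⟨hs, ht⟩ : 0 ≤ s ∧ 0 ≤ 4 * t :=
    nonneg_and_nonneg_of_add_nonneg_of_mul_nonneg (by rw [hadd]; positivity)
      (by rw [hmul]; positivity)
  have hcop : IsCoprime s (4 * t) := isCoprime_of_mul_eq_prime_mul
    (Nat.prime_iff_prime_int.1 hp) hmul (hadd ▸ hx2.pow.mul_right hxy.of_mul_right_right.pow)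
  obtain ⟨a, b, hab, hby, ⟨rfl, rfl⟩ | ⟨rfl, rfl⟩⟩ := exists_pow_and_prime_mul_pow hp four_ne_zero
    hs (by lia) hcop.of_mul_right_right hst
  · exact ⟨a, b, hab, hby, by linear_combination -hadd⟩
  have hb : IsCoprime 2 b := Int.isCoprime_two_left.2 <| by
    have hodd : Odd (p * b ^ 4 + 4 * a ^ 4) := hadd ▸ hx.pow
    have heven : Even (4 * a ^ 4) := ⟨2 * a ^ 4, by ring⟩
    exact (Int.odd_pow' four_ne_zero).1 (Int.odd_mul.1 ((Int.odd_add.1 hodd).2 heven)).2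
  obtain ⟨a', b', hab', hbb', h'⟩ := exists_sq_eq_pow_four_sub_mul_pow_four hp hmod
    (hb.mul_left hab) (z := 2 * x) (by linear_combination -4 * hadd)
  have hb' : Odd b' := Int.isCoprime_two_left.1 (hb.of_isCoprime_of_dvd_right hbb')
  exact absurd h' (sq_ne_pow_four_sub_mul_pow_four_of_odd hp hmod hb' hab')

theorem sq_ne_pow_four_sub_mul_pow_four (hp : p.Prime)
    (hmod : p % 16 = 3 ∨ p % 16 = 13 ∨ p % 16 = 11) {x y z : ℤ} (hy : y ≠ 0)
    (hxy : IsCoprime x y) : z ^ 2 ≠ x ^ 4 - p * y ^ 4 := by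
  induction hn : y.natAbs using Nat.strong_induction_on generalizing x y z with
  | _ n ih =>
    intro h
    obtain heven | hodd := Int.even_or_odd y
    · obtain ⟨y, rfl⟩ := heven.two_dvd
      have hy0 : y ≠ 0 := right_ne_zero_of_mul hy
      obtain ⟨a, b, hab, hby, hxab⟩ :=
        exists_sq_eq_pow_four_add_four_mul_pow_four hp hmod hxy h
      have hb : b ≠ 0 := ne_zero_of_dvd_ne_zero hy0 hby
      obtain ⟨a', b', hab', hbb', haab⟩ :=
        exists_sq_eq_pow_four_sub_mul_pow_four hp hmod hab hxab
      have hlt : b'.natAbs < n := by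
        have := Int.natAbs_le_of_dvd_ne_zero (hbb'.trans hby) hy0
        lia
      exact ih _ hlt (ne_zero_of_dvd_ne_zero hb hbb') hab' rfl haab
    · exact sq_ne_pow_four_sub_mul_pow_four_of_odd hp hmod hodd hxy h

theorem sq_ne_pow_four_add_four_mul_pow_four (hp : p.Prime)
    (hmod : p % 16 = 3 ∨ p % 16 = 13 ∨ p % 16 = 11) {x y z : ℤ} (hy : y ≠ 0)
    (hxy : IsCoprime x y) : z ^ 2 ≠ x ^ 4 + 4 * p * y ^ 4 := by
  intro h
  obtain ⟨a, b, hab, hby, hxab⟩ := exists_sq_eq_pow_four_sub_mul_pow_four hp hmod hxy h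
  exact sq_ne_pow_four_sub_mul_pow_four hp hmod (ne_zero_of_dvd_ne_zero hy hby) hab hxab

theorem not_isSquare_rat_pow_four_sub (hp : p.Prime)
    (hmod : p % 16 = 3 ∨ p % 16 = 13 ∨ p % 16 = 11) (v : ℚ) : ¬IsSquare (v ^ 4 - p) := by
  intro hv
  obtain ⟨z, hz⟩ := isSquare_num_pow_add_mul_den_pow (n := 4) (by decide) (c := -p) (v := v)
    (by simpa [← sub_eq_add_neg] using hv)
  have hsq : z ^ 2 = v.num ^ 4 - p * v.den ^ 4 := by linear_combination -hz
  exact sq_ne_pow_four_sub_mul_pow_four hp hmod (mod_cast v.den_ne_zero) v.isCoprime_num_den hsq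

theorem not_isSquare_rat_pow_four_add_four_mul (hp : p.Prime)
    (hmod : p % 16 = 3 ∨ p % 16 = 13 ∨ p % 16 = 11) (v : ℚ) : ¬IsSquare (v ^ 4 + 4 * p) := by
  intro hv
  obtain ⟨z, hz⟩ := isSquare_num_pow_add_mul_den_pow (n := 4) (by decide) (c := 4 * p) (v := v)
    (by simpa using hv)
  have hsq : z ^ 2 = v.num ^ 4 + 4 * p * v.den ^ 4 := by linear_combination -hz
  exact sq_ne_pow_four_add_four_mul_pow_four hp hmod (mod_cast v.den_ne_zero)
    v.isCoprime_num_den hsq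

end Descent

theorem x4_add_4p_and_x4_sub_p_superirreducible (p : ℕ) (hp : p.Prime)
    (hmod : p % 16 = 3 ∨ p % 16 = 13 ∨ p % 16 = 11) :
    (Irreducible (X ^ 4 + C (4 * p : ℚ)) →
      IsSuperirreducible ℚ 2 (X ^ 4 + C (4 * p : ℚ))) ∧
    (Irreducible (X ^ 4 - C (p : ℚ)) →
      IsSuperirreducible ℚ 2 (X ^ 4 - C (p : ℚ))) := by
  have heven : Even 4 := by decide
  constructor <;> intro hirr
  · refine isSuperirreducible_two_of_not_isSquare_eval hirr
      (by rwa [natDegree_X_pow_add_C]) fun v ↦ ?_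
    rw [leadingCoeff_X_pow_add_C four_pos]
    simpa using not_isSquare_rat_pow_four_add_four_mul hp hmod v
  · refine isSuperirreducible_two_of_not_isSquare_eval hirr
      (by rwa [natDegree_X_pow_sub_C]) fun v ↦ ?_
    rw [leadingCoeff_X_pow_sub_C four_pos]
    simpa using not_isSquare_rat_pow_four_sub hp hmod v
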